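/- Let A be a commutative ring, n ≥ 1, and work in B = A[x_{01},x_{11},…,x_{0n},x_{1n}]. Let F(Z) = Σ_{k=0}^n (−1)^k p_k(x) Z^{n−k} be the polynomial over B whose coefficients are (up to sign) the elementary homogeneous symmetric polynomials, and let F′ be its formal derivative. Then Res_{n,n−1}(F, F′) = (−1)^{n(n−1)/2} · p_0(x) · ∏_{1 ≤ i < j ≤ n} (x_{1i} x_{0j} − x_{0i} x_{1j})^2. -/

import Mathlib

open MvPolynomial Polynomial

/-- The Sylvester matrix of `f` and `g`, viewed with formal degrees `n` and `m`:
an `(m + n) × (m + n)` matrix whose first `m` rows hold shifted coefficients of `f`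
(from the coefficient of `Z^n` down to the constant term) and whose last `n` rows
hold shifted coefficients of `g`. -/
noncomputable def sylvester {R : Type*} [CommRing R] (n m : ℕ) (f g : R[X]) :
    Matrix (Fin (m + n)) (Fin (m + n)) R :=
  Matrix.of fun i j =>
    Fin.addCases
      (fun i₀ : Fin m =>
        if (i₀ : ℕ) ≤ (j : ℕ) ∧ (j : ℕ) ≤ (i₀ : ℕ) + n then
          f.coeff (n - ((j : ℕ) - (i₀ : ℕ))) else 0)
      (fun i₁ : Fin n =>
        if (i₁ : ℕ) ≤ (j : ℕ) ∧ (j : ℕ) ≤ (i₁ : ℕ) + m then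
          g.coeff (m - ((j : ℕ) - (i₁ : ℕ))) else 0)
      i

/-- The resultant `Res_{n,m}(f, g)`: the determinant of the Sylvester matrix of `f` and `g`
viewed with formal degrees `n` and `m`. -/
noncomputable def res {R : Type*} [CommRing R] (n m : ℕ) (f g : R[X]) : R :=
  (sylvester n m f g).det

/-- The elementary homogeneous symmetric polynomial `p_k` in the `2n` variables
`x_{01}, x_{11}, …, x_{0n}, x_{1n}` (variable `(i, 0)` is `x_{0i}` and `(i, 1)` is `x_{1i}`). -/
noncomputable def ehsp (A : Type*) [CommRing A] (n : ℕ) (k : ℕ) :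
    MvPolynomial (Fin n × Fin 2) A :=
  ∑ S ∈ Finset.powersetCard k (Finset.univ : Finset (Fin n)),
    (∏ i ∈ Sᶜ, X (i, (0 : Fin 2))) * ∏ i ∈ S, X (i, (1 : Fin 2))


lemma res_eq_resultant {R : Type*} [CommRing R] (n m : ℕ) (f g : R[X]) :
    res n m f g = Polynomial.resultant f g n m := by
  unfold res Polynomial.resultant
  rw [← Matrix.det_transpose (Polynomial.sylvester f g n m),
    ← Matrix.det_submatrix_equiv_self ((Fin.revPerm).trans (finCongr (add_comm m n)))]
  congr 1
  ext i j
  simp only [Matrix.submatrix_apply, Matrix.transpose_apply, Equiv.trans_apply, Fin.revPerm_apply,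
    finCongr_apply, Polynomial.sylvester, _root_.sylvester, Matrix.of_apply, Set.mem_Icc]
  induction i using Fin.addCases with
  | left i =>
    have : Fin.cast (add_comm m n) (Fin.rev (Fin.castAdd n i)) = Fin.natAdd n (Fin.rev i) := by
      ext; simp [Fin.val_rev]; omega
    rw [this, Fin.addCases_left, Fin.addCases_right]
    simp only [Fin.val_cast, Fin.val_rev]
    have := i.2
    have := j.2
    split_ifs <;> first | rfl | (exfalso; omega) | (congr 1; omega)
  | right i =>
    have : Fin.cast (add_comm m n) (Fin.rev (Fin.natAdd m i)) = Fin.castAdd m (Fin.rev i) := by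
      ext; simp [Fin.val_rev]; omega
    rw [this, Fin.addCases_left, Fin.addCases_right]
    simp only [Fin.val_cast, Fin.val_rev]
    have := i.2
    have := j.2
    split_ifs <;> first | rfl | (exfalso; omega) | (congr 1; omega)

lemma prod_offdiag {R : Type*} [CommRing R] (n : ℕ) (a b : Fin n → R) :
    ∏ i, ∏ j ∈ Finset.univ.erase i, (a j * b i - a i * b j) =
      (-1) ^ (n * (n - 1) / 2) *
        ∏ p ∈ Finset.univ.filter (fun p : Fin n × Fin n => p.1 < p.2),
          (b p.1 * a p.2 - a p.1 * b p.2) ^ 2 := by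
  have hc : (Finset.univ.filter (fun p : Fin n × Fin n => p.1 < p.2)).card = n * (n - 1) / 2 := by
    rw [← Finset.univ_product_univ, Finset.card_filter, Finset.sum_product_right]
    have : ∀ j : Fin n, (∑ i : Fin n, if i < j then 1 else 0) = (j : ℕ) := by
      intro j
      rw [← Finset.card_filter, ← Fin.card_Iio j]
      congr 1
      ext; simp
    rw [Finset.sum_congr rfl fun j _ => this j]
    rw [Fin.sum_univ_eq_sum_range (fun i => i), Finset.sum_range_id]
  rw [← hc, ← Finset.prod_const, ← Finset.prod_mul_distrib]
  have h1 : ∏ i, ∏ j ∈ Finset.univ.erase i, (a j * b i - a i * b j) =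
     ∏ p ∈ Finset.univ.filter (fun p : Fin n × Fin n => p.1 ≠ p.2),
       (a p.2 * b p.1 - a p.1 * b p.2) := by
    rw [Finset.prod_filter, ← Finset.univ_product_univ, Finset.prod_product]
    refine Finset.prod_congr rfl fun i _ => ?_
    rw [← Finset.prod_filter]
    refine Finset.prod_congr ?_ fun _ _ => rfl
    ext j; simp [eq_comm]
  have h2 : Finset.univ.filter (fun p : Fin n × Fin n => p.1 ≠ p.2) =
      Finset.univ.filter (fun p : Fin n × Fin n => p.1 < p.2) ∪
      Finset.univ.filter (fun p : Fin n × Fin n => p.2 < p.1) := by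
    ext p; simp [lt_or_lt_iff_ne]
  have h3 : ∏ p ∈ Finset.univ.filter (fun p : Fin n × Fin n => p.2 < p.1),
       (a p.2 * b p.1 - a p.1 * b p.2) = ∏ p ∈ Finset.univ.filter (fun p : Fin n × Fin n => p.1 < p.2),
       (a p.1 * b p.2 - a p.2 * b p.1) := by
    refine Finset.prod_bij' (fun p _ => p.swap) (fun p _ => p.swap) ?_ ?_ ?_ ?_ ?_ <;> simp
  rw [h1, h2, Finset.prod_union, h3, ← Finset.prod_mul_distrib]
  · exact Finset.prod_congr rfl fun p _ => by ring
  · rw [Finset.disjoint_filter]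
    intro p _ h; exact h.not_gt

lemma natDegree_F {R : Type*} [CommRing R] (n : ℕ) (a b : Fin n → R) :
    (∏ i, (Polynomial.C (a i) * Polynomial.X - Polynomial.C (b i))).natDegree ≤ n := by
  refine (Polynomial.natDegree_prod_le _ _).trans ?_
  refine (Finset.sum_le_card_nsmul _ _ 1 fun i _ => ?_).trans (by simp)
  compute_degree

lemma res_field {K : Type*} [Field K] (n : ℕ) (hn : 1 ≤ n) (a b : Fin n → K) (ha : ∀ i, a i ≠ 0) :
    Polynomial.resultant (∏ i, (Polynomial.C (a i) * Polynomial.X - Polynomial.C (b i)))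
      (derivative (∏ i, (Polynomial.C (a i) * Polynomial.X - Polynomial.C (b i)))) n (n - 1) =
    (-1) ^ (n * (n - 1) / 2) * (∏ i, a i) *
        ∏ p ∈ Finset.univ.filter (fun p : Fin n × Fin n => p.1 < p.2),
          (b p.1 * a p.2 - a p.1 * b p.2) ^ 2 := by
  set F := ∏ i, (Polynomial.C (a i) * Polynomial.X - Polynomial.C (b i)) with hF
  have hd : (derivative F).natDegree ≤ n - 1 :=
    (Polynomial.natDegree_derivative_le _).trans (Nat.sub_le_sub_right (natDegree_F n a b) 1)
  have hlin : ∀ i, Polynomial.C (a i) * Polynomial.X - Polynomial.C (b i) =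
      Polynomial.C (a i) * (Polynomial.X - Polynomial.C (b i / a i)) := by
    intro i
    rw [mul_sub, ← Polynomial.C_mul, mul_div_cancel₀ _ (ha i)]
  have hdeg : ∀ i, (Polynomial.C (a i) * Polynomial.X - Polynomial.C (b i)).natDegree = 1 := by
    intro i
    rw [hlin, Polynomial.natDegree_C_mul (ha i), Polynomial.natDegree_X_sub_C]
  have hne : ∀ i, (Polynomial.C (a i) * Polynomial.X - Polynomial.C (b i)) ≠ 0 := by
    intro i h
    have := hdeg i
    rw [h] at this; simp at this
  have hFd : F.natDegree = n := by
    rw [hF, Polynomial.natDegree_prod _ _ fun i _ => hne i]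
    simp [hdeg]
  have key := Polynomial.resultant_prod_left Finset.univ
    (fun i => Polynomial.C (a i) * Polynomial.X - Polynomial.C (b i)) (derivative F) (n - 1)
    (Finset.prod_ne_zero_iff.2 fun i _ => Polynomial.leadingCoeff_ne_zero.2 (hne i)) hd
  rw [← hF, hFd] at key
  rw [key]
  have hi : ∀ i, (Polynomial.C (a i) * Polynomial.X - Polynomial.C (b i)).resultant (derivative F)
      (Polynomial.C (a i) * Polynomial.X - Polynomial.C (b i)).natDegree (n - 1) =
      a i * ∏ j ∈ Finset.univ.erase i, (a j * b i - a i * b j) := by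
    intro i
    rw [hdeg, hlin, Polynomial.resultant_C_mul_left, Polynomial.resultant_X_sub_C_left _ _ _ hd]
    have : (derivative F).eval (b i / a i) =
        a i * ∏ j ∈ Finset.univ.erase i, (a j * (b i / a i) - b j) := by
      rw [hF, ← Finset.mul_prod_erase _ _ (Finset.mem_univ i), Polynomial.derivative_mul]
      simp [Polynomial.eval_prod, mul_div_cancel₀ _ (ha i)]
    rw [this, mul_left_comm]
    have hc : (Finset.univ.erase i).card = n - 1 := by simp
    rw [← hc, ← Finset.prod_const, ← Finset.prod_mul_distrib]
    congr 1
    refine Finset.prod_congr rfl fun j _ => ?_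
    have := ha i
    field_simp
  rw [Finset.prod_congr rfl fun i _ => hi i, Finset.prod_mul_distrib, prod_offdiag]
  ring

lemma res_map {R S : Type*} [CommRing R] [CommRing S] (φ : R →+* S) (n : ℕ) (a b : Fin n → R) :
    Polynomial.resultant (∏ i, (Polynomial.C (φ (a i)) * Polynomial.X - Polynomial.C (φ (b i))))
      (derivative (∏ i, (Polynomial.C (φ (a i)) * Polynomial.X - Polynomial.C (φ (b i)))))
        n (n - 1) =
    φ (Polynomial.resultant (∏ i, (Polynomial.C (a i) * Polynomial.X - Polynomial.C (b i)))
      (derivative (∏ i, (Polynomial.C (a i) * Polynomial.X - Polynomial.C (b i)))) n (n - 1)) := by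
  have h : (∏ i, (Polynomial.C (a i) * Polynomial.X - Polynomial.C (b i))).map φ =
      ∏ i, (Polynomial.C (φ (a i)) * Polynomial.X - Polynomial.C (φ (b i))) := by
    simp [Polynomial.map_prod]
  rw [← h, Polynomial.derivative_map, Polynomial.resultant_map_map]

lemma res_int (n : ℕ) (hn : 1 ≤ n) (a b : Fin n → MvPolynomial (Fin n × Fin 2) ℤ)
    (ha : ∀ i, a i ≠ 0) :
    Polynomial.resultant (∏ i, (Polynomial.C (a i) * Polynomial.X - Polynomial.C (b i)))
      (derivative (∏ i, (Polynomial.C (a i) * Polynomial.X - Polynomial.C (b i)))) n (n - 1) =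
    (-1) ^ (n * (n - 1) / 2) * (∏ i, a i) *
        ∏ p ∈ Finset.univ.filter (fun p : Fin n × Fin n => p.1 < p.2),
          (b p.1 * a p.2 - a p.1 * b p.2) ^ 2 := by
  have hinj := IsFractionRing.injective (MvPolynomial (Fin n × Fin 2) ℤ)
    (FractionRing (MvPolynomial (Fin n × Fin 2) ℤ))
  apply hinj
  rw [← res_map, res_field n hn]
  · simp
  · intro i h
    exact ha i (hinj (by simpa using h))

lemma res_gen {R : Type*} [CommRing R] (n : ℕ) (hn : 1 ≤ n) (a b : Fin n → R) :
    Polynomial.resultant (∏ i, (Polynomial.C (a i) * Polynomial.X - Polynomial.C (b i)))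
      (derivative (∏ i, (Polynomial.C (a i) * Polynomial.X - Polynomial.C (b i)))) n (n - 1) =
    (-1) ^ (n * (n - 1) / 2) * (∏ i, a i) *
        ∏ p ∈ Finset.univ.filter (fun p : Fin n × Fin n => p.1 < p.2),
          (b p.1 * a p.2 - a p.1 * b p.2) ^ 2 := by
  obtain ⟨φ, h0, h1⟩ : ∃ φ : MvPolynomial (Fin n × Fin 2) ℤ →+* R,
      (∀ i, φ (MvPolynomial.X (i, 0)) = a i) ∧ ∀ i, φ (MvPolynomial.X (i, 1)) = b i :=
    ⟨MvPolynomial.eval₂Hom (Int.castRingHom R) (fun p => if p.2 = 0 then a p.1 else b p.1),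
      fun i => by simp, fun i => by simp⟩
  obtain rfl : (fun i => φ (MvPolynomial.X (i, 0))) = a := funext h0
  obtain rfl : (fun i => φ (MvPolynomial.X (i, 1))) = b := funext h1
  have h := congrArg φ (res_int n hn (fun i => MvPolynomial.X (i, 0))
    (fun i => MvPolynomial.X (i, 1)) (fun i => MvPolynomial.X_ne_zero _))
  rw [← res_map] at h
  rw [h, map_mul, map_mul, map_pow, map_neg, map_one, map_prod φ, map_prod φ]
  congr 1
  refine Finset.prod_congr rfl fun p _ => ?_
  rw [map_pow, map_sub, map_mul, map_mul]

lemma F_eq (A : Type*) [CommRing A] (n : ℕ) :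
    (∑ k : Fin (n + 1),
          Polynomial.C ((-1 : MvPolynomial (Fin n × Fin 2) A) ^ (k : ℕ) * ehsp A n (k : ℕ)) *
            Polynomial.X ^ (n - (k : ℕ))) =
    ∏ i : Fin n, (Polynomial.C (MvPolynomial.X (i, (0 : Fin 2)) : MvPolynomial (Fin n × Fin 2) A) *
      Polynomial.X - Polynomial.C (MvPolynomial.X (i, (1 : Fin 2)))) := by
  simp only [sub_eq_neg_add]
  rw [Finset.prod_add, Finset.sum_powerset,
    Fin.sum_univ_eq_sum_range (fun k => Polynomial.C ((-1 : MvPolynomial (Fin n × Fin 2) A) ^ k *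
      ehsp A n k) * Polynomial.X ^ (n - k)), Finset.card_univ, Fintype.card_fin]
  refine Finset.sum_congr rfl fun k _ => ?_
  rw [ehsp, Finset.mul_sum, map_sum, Finset.sum_mul]
  refine Finset.sum_congr rfl fun S hS => ?_
  have hS := (Finset.mem_powersetCard.1 hS).2
  rw [Finset.prod_congr rfl fun i (_ : i ∈ S) => neg_eq_neg_one_mul (Polynomial.C (MvPolynomial.X (i, (1 : Fin 2)) : MvPolynomial (Fin n × Fin 2) A)),
    Finset.prod_mul_distrib, Finset.prod_mul_distrib, Finset.prod_const, Finset.prod_const,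
    ← Finset.compl_eq_univ_sdiff,
    Finset.card_compl, Fintype.card_fin, hS]
  simp only [map_mul, map_pow, map_neg, map_one, map_prod]
  ring

/-- Let `F(Z) = Σ_{k=0}^n (−1)^k p_k(x) Z^{n−k}` over
`B = A[x_{01},…,x_{1n}]` and let `F′` be its formal derivative. Then
`Res_{n,n−1}(F, F′) = (−1)^{n(n−1)/2} p_0(x) ∏_{i<j} (x_{1i}x_{0j} − x_{0i}x_{1j})^2`. -/
theorem res_ehsp_derivative (A : Type*) [CommRing A] (n : ℕ) (hn : 1 ≤ n) :
    res n (n - 1)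
        (∑ k : Fin (n + 1),
          Polynomial.C ((-1 : MvPolynomial (Fin n × Fin 2) A) ^ (k : ℕ) * ehsp A n (k : ℕ)) *
            Polynomial.X ^ (n - (k : ℕ)))
        (derivative (∑ k : Fin (n + 1),
          Polynomial.C ((-1 : MvPolynomial (Fin n × Fin 2) A) ^ (k : ℕ) * ehsp A n (k : ℕ)) *
            Polynomial.X ^ (n - (k : ℕ)))) =
      (-1 : MvPolynomial (Fin n × Fin 2) A) ^ (n * (n - 1) / 2) * ehsp A n 0 *
        ∏ p ∈ Finset.univ.filter (fun p : Fin n × Fin n => p.1 < p.2),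
          (X (p.1, (1 : Fin 2)) * X (p.2, (0 : Fin 2)) -
            X (p.1, (0 : Fin 2)) * X (p.2, (1 : Fin 2))) ^ 2 := by

  rw [res_eq_resultant, F_eq, res_gen n hn]
  simp [ehsp]
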